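/- Let BF be the 8×8 integer matrix [[14,3,62,51,46,35,30,19],[52,61,4,13,20,29,36,45],[11,6,59,54,43,38,27,22],[53,60,5,12,21,28,37,44],[55,58,7,10,23,26,39,42],[9,8,57,56,41,40,25,24],[50,63,2,15,18,31,34,47],[16,1,64,49,48,33,32,17]]. Then the characteristic polynomial of BF equals X^8 - 260·X^7, and BF³ = 2197000•J₈ where J₈ is the 8×8 all-ones matrix; hence all powers BFᵖ with p ≥ 3 are constant matrices. -/

import Mathlib

open Matrix Polynomial

/-- The 8×8 magic square `BF` of Cook, Bacon and Hillman, obtained by row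
permutations of a Franklin bent-diagonal square. -/
def BF : Matrix (Fin 8) (Fin 8) ℤ :=
  !![14, 3, 62, 51, 46, 35, 30, 19;
     52, 61, 4, 13, 20, 29, 36, 45;
     11, 6, 59, 54, 43, 38, 27, 22;
     53, 60, 5, 12, 21, 28, 37, 44;
     55, 58, 7, 10, 23, 26, 39, 42;
     9, 8, 57, 56, 41, 40, 25, 24;
     50, 63, 2, 15, 18, 31, 34, 47;
     16, 1, 64, 49, 48, 33, 32, 17]

/-- The 8×8 all-ones matrix. -/
def J8 : Matrix (Fin 8) (Fin 8) ℤ := Matrix.of fun _ _ => 1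

/-!
The entries of `BF` have the form `w j + 8 * e i * t j + g i * s j`, so `BF = 1 wᵀ + N` with
`N = 8 e tᵀ + g sᵀ`. The vectors `t` and `s` have sum zero, hence `N * (1 wᵀ) = 0`, and among the
pairings of `t, s` with `e, g` only `t ⬝ᵥ g` is nonzero, hence `N ^ 3 = 0`.

If `N * M = 0`, then `(X - N) * (X - M) = X * (X - (M + N))`, so adding a nilpotent `N` to `M` does
not change the characteristic polynomial; for `BF` this leaves that of the rank-one matrix `1 wᵀ`.
Moreover `(M + N) ^ (k + 1) = M * (M + N) ^ k + N ^ (k + 1)`, so for `k ≥ 2` the power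
`BF ^ (k + 1)` is `1 (wᵀ BF ^ k)`, which is constant because `wᵀ BF` is and all column sums of `BF`
are equal.
-/

section Semiring

variable {R : Type*} [Semiring R] {a b : R}

theorem mul_add_pow_of_mul_eq_zero (h : b * a = 0) (k : ℕ) : b * (a + b) ^ k = b ^ (k + 1) := by
  induction k with
  | zero => simp only [pow_zero, mul_one, zero_add, pow_one]
  | succ k ih =>
    calc b * (a + b) ^ (k + 1) = b ^ (k + 1) * (a + b) := by rw [pow_succ, ← mul_assoc, ih]
      _ = b ^ k * (b * a) + b ^ (k + 1) * b := by rw [mul_add, pow_succ, mul_assoc (b ^ k) b a]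
      _ = b ^ (k + 2) := by rw [h, mul_zero, zero_add, ← pow_succ]

theorem add_pow_succ_of_mul_eq_zero (h : b * a = 0) (k : ℕ) :
    (a + b) ^ (k + 1) = a * (a + b) ^ k + b ^ (k + 1) := by
  rw [pow_succ', add_mul, mul_add_pow_of_mul_eq_zero h]

end Semiring

section CommSemiring

variable {n R : Type*} [Fintype n] [DecidableEq n] [CommSemiring R]

theorem vecMul_pow_of_vecMul_eq_smul {A : Matrix n n R} {v : n → R} {r : R}
    (h : v ᵥ* A = r • v) (k : ℕ) : v ᵥ* A ^ k = r ^ k • v := by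
  induction k with
  | zero => rw [pow_zero, pow_zero, vecMul_one, one_smul]
  | succ k ih => rw [pow_succ, ← vecMul_vecMul, ih, smul_vecMul, h, smul_smul, pow_succ]

theorem vecMulVec_add_vecMulVec_pow_three_eq_zero {u₁ v₁ u₂ v₂ : n → R}
    (h₁₁ : v₁ ⬝ᵥ u₁ = 0) (h₂₁ : v₂ ⬝ᵥ u₁ = 0) (h₂₂ : v₂ ⬝ᵥ u₂ = 0) :
    (vecMulVec u₁ v₁ + vecMulVec u₂ v₂) ^ 3 = 0 := by
  have sq_eq : (vecMulVec u₁ v₁ + vecMulVec u₂ v₂) ^ 2 = vecMulVec u₁ ((v₁ ⬝ᵥ u₂) • v₂) := by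
    simp only [sq, add_mul, mul_add, vecMulVec_mul_vecMulVec, h₁₁, h₂₁, h₂₂, zero_smul,
      vecMulVec_zero, zero_add, add_zero]
  simp only [pow_succ _ 2, sq_eq, mul_add, vecMulVec_mul_vecMulVec, smul_dotProduct, h₂₁, h₂₂,
    smul_zero, zero_smul, vecMulVec_zero, add_zero]

end CommSemiring

section CommRing

variable {n R : Type*} [Fintype n] [DecidableEq n] [CommRing R]

theorem charmatrix_mul_charmatrix_of_mul_eq_zero {M N : Matrix n n R} (h : N * M = 0) :
    N.charmatrix * M.charmatrix = (X : R[X]) • (M + N).charmatrix := by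
  have h_map : (C : R →+* R[X]).mapMatrix N * (C : R →+* R[X]).mapMatrix M = 0 := by
    rw [← map_mul, h, map_zero]
  simp only [charmatrix, scalar_apply, ← smul_one_eq_diagonal, map_add, sub_mul, mul_sub, h_map,
    Matrix.smul_mul, Matrix.mul_smul, one_mul, mul_one, smul_sub, smul_add]
  abel

theorem charpoly_mul_charpoly_of_mul_eq_zero {M N : Matrix n n R} (h : N * M = 0) :
    N.charpoly * M.charpoly = X ^ Fintype.card n * (M + N).charpoly := by
  simp only [charpoly, ← det_mul, charmatrix_mul_charmatrix_of_mul_eq_zero h, det_smul]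

theorem charpoly_eq_X_pow_of_isNilpotent [IsReduced R] {N : Matrix n n R} (hN : IsNilpotent N) :
    N.charpoly = X ^ Fintype.card n := by
  ext i
  have coeff_nilpotent : IsNilpotent ((N.charpoly - X ^ Fintype.card n).coeff i) :=
    Polynomial.isNilpotent_iff.mp (isNilpotent_charpoly_sub_pow_of_isNilpotent hN) i
  rw [← sub_eq_zero, ← coeff_sub, coeff_nilpotent.eq_zero]

theorem charpoly_add_of_isNilpotent_of_mul_eq_zero [IsReduced R] {M N : Matrix n n R}
    (hN : IsNilpotent N) (h : N * M = 0) : (M + N).charpoly = M.charpoly := by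
  apply (monic_X_pow (Fintype.card n)).isRegular.left
  change X ^ Fintype.card n * (M + N).charpoly = X ^ Fintype.card n * M.charpoly
  rw [← charpoly_mul_charpoly_of_mul_eq_zero h, charpoly_eq_X_pow_of_isNilpotent hN]

end CommRing

theorem J8_eq_vecMulVec_one_one : J8 = vecMulVec 1 1 := by
  ext i j
  rw [J8, of_apply, vecMulVec_apply, Pi.one_apply, Pi.one_apply, mul_one]

namespace BF

/-- The vector `w` of the decomposition `BF = 1 wᵀ + 8 e tᵀ + g sᵀ`. It is `(65 + s) / 2`: the mean
entry `65 / 2` is not an integer, and the rounding is compensated in `rowOffset`. -/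
def colBase : Fin 8 → ℤ := ![33, 32, 33, 32, 33, 32, 33, 32]

/-- The vector `e` of the decomposition `BF = 1 wᵀ + 8 e tᵀ + g sᵀ`. -/
def rowSign : Fin 8 → ℤ := ![1, -1, 1, -1, -1, 1, -1, 1]

/-- The vector `t` of the decomposition `BF = 1 wᵀ + 8 e tᵀ + g sᵀ`, which is constant on the pairs
of adjacent columns. -/
def colPairLevel : Fin 8 → ℤ := ![-3, -3, 3, 3, 1, 1, -1, -1]

/-- The vector `g` of the decomposition `BF = 1 wᵀ + 8 e tᵀ + g sᵀ`. -/
def rowOffset : Fin 8 → ℤ := ![5, -5, 2, -4, -2, 0, -7, 7]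

/-- The vector `s` of the decomposition `BF = 1 wᵀ + 8 e tᵀ + g sᵀ`, which separates the two columns
of each adjacent pair. -/
def colParity : Fin 8 → ℤ := ![1, -1, 1, -1, 1, -1, 1, -1]

/-- The matrix `N = 8 e tᵀ + g sᵀ`, by which `BF` deviates from the matrix `1 wᵀ` with equal
rows. -/
def deviation : Matrix (Fin 8) (Fin 8) ℤ :=
  vecMulVec (8 • rowSign) colPairLevel + vecMulVec rowOffset colParity

theorem eq_vecMulVec_add_deviation : BF = vecMulVec 1 colBase + deviation := by
  decide +kernel

theorem deviation_pow_three : deviation ^ 3 = 0 :=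
  vecMulVec_add_vecMulVec_pow_three_eq_zero
    (by decide : colPairLevel ⬝ᵥ (8 • rowSign) = 0)
    (by decide : colParity ⬝ᵥ (8 • rowSign) = 0)
    (by decide : colParity ⬝ᵥ rowOffset = 0)

theorem deviation_mulVec_one : deviation *ᵥ 1 = 0 := by
  have sum_colPairLevel : colPairLevel ⬝ᵥ 1 = 0 := by decide
  have sum_colParity : colParity ⬝ᵥ 1 = 0 := by decide
  rw [deviation, add_mulVec, vecMulVec_mulVec, vecMulVec_mulVec, sum_colPairLevel, sum_colParity,
    MulOpposite.op_zero, zero_smul, zero_smul, add_zero]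

theorem deviation_mul_vecMulVec_one (v : Fin 8 → ℤ) : deviation * vecMulVec 1 v = 0 := by
  rw [mul_vecMulVec, deviation_mulVec_one, zero_vecMulVec]

theorem one_vecMul_eq_smul : 1 ᵥ* BF = (260 : ℤ) • 1 := by
  decide +kernel

theorem colBase_vecMul_eq_smul : colBase ᵥ* BF = (8450 : ℤ) • 1 := by
  decide +kernel

theorem pow_add_three (k : ℕ) : BF ^ (k + 3) = (2197000 * 260 ^ k : ℤ) • J8 := by
  have deviation_pow : deviation ^ (k + 3) = 0 := by rw [pow_add, deviation_pow_three, mul_zero]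
  have colBase_vecMul_pow : colBase ᵥ* BF ^ (k + 2) = (2197000 * 260 ^ k : ℤ) • 1 := by
    rw [pow_succ', ← vecMul_vecMul, colBase_vecMul_eq_smul, smul_vecMul,
      vecMul_pow_of_vecMul_eq_smul one_vecMul_eq_smul, smul_smul]
    congr 1
    ring
  calc BF ^ (k + 3)
      = vecMulVec 1 colBase * BF ^ (k + 2) + deviation ^ (k + 3) := by
        rw [eq_vecMulVec_add_deviation]
        exact add_pow_succ_of_mul_eq_zero (deviation_mul_vecMulVec_one colBase) (k + 2)
    _ = (2197000 * 260 ^ k : ℤ) • J8 := by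
        rw [deviation_pow, add_zero, vecMulVec_mul, colBase_vecMul_pow, vecMulVec_smul,
          J8_eq_vecMulVec_one_one]

theorem charpoly_eq : BF.charpoly = X ^ 8 - C 260 * X ^ 7 := by
  have sum_colBase : 1 ⬝ᵥ colBase = 260 := by decide
  calc BF.charpoly = (vecMulVec 1 colBase).charpoly := by
        rw [eq_vecMulVec_add_deviation]
        exact charpoly_add_of_isNilpotent_of_mul_eq_zero ⟨3, deviation_pow_three⟩
          (deviation_mul_vecMulVec_one colBase)
    _ = X ^ 8 - C 260 * X ^ 7 := by
        rw [charpoly_vecMulVec, sum_colBase, Fintype.card_fin, smul_eq_C_mul]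

end BF

/-- `BF` has characteristic polynomial `X^8 - 260·X^7`,
`BF³ = 2197000 • J₈`, hence all powers `BFᵖ` with `p ≥ 3` are constant. -/
theorem BF_charpoly_and_cube :
    BF.charpoly = X ^ 8 - C 260 * X ^ 7 ∧
    BF ^ 3 = (2197000 : ℤ) • J8 ∧
    ∀ p : ℕ, 3 ≤ p → ∃ c : ℤ, BF ^ p = c • J8 := by
  refine ⟨BF.charpoly_eq, ?_, fun p hp => ?_⟩
  · simpa only [zero_add, pow_zero, mul_one] using BF.pow_add_three 0
  · obtain ⟨k, rfl⟩ := Nat.exists_eq_add_of_le' hp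
    exact ⟨2197000 * 260 ^ k, BF.pow_add_three k⟩
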